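/- Assume Slater's condition: there exist P̃ ∈ P(R) and η > 0 such that E_{P̃}[C(·, b)] − v ≤ −η for every b ∈ R. Assume also λ_1 = 0 and v ≤ 2Θ. Then for every integer T ≥ 1 and every positive integer ℵ, the cumulative constraint violation of Algorithm 1, measured along the requests it uses, satisfies Σ_{t=1}^{T} ( E_{P^t}[C_V(·, b^{t-1}) + C_T(·, b^{t-1})] − v ) ≤ θ ℵ / μ, where ϱ = μ(2Θ − v), χ = (1/(η ℵ)) ( (1/2) μ (4Θ² + v²) + (α/2)|R|Θ² + 1/(α(ℵ+1)) + Θ ) + ϱ(ℵ+2)/(2ℵ), and θ = max{ϱ, χ}. -/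

import Mathlib

/-!
Since `lam (t+1) ≥ lam t + μ g_t`, with `g_t` the constraint value at step `t`, and `lam 1 = 0`, the
cumulative violation is at most `lam (T+1) / μ`; so it suffices to show that the multipliers never
exceed `θ ℵ`.

The proximal objective is strongly convex, so comparing its minimizer `P t` with the Slater point
(`prox_three_point`) bounds `lam t * g_t` by `Θ - η * lam t` plus a telescoping difference of squared
distances. This gives a drift inequality for `lam ^ 2`. If `lam` exceeded `θ ℵ` for the first time at
some index `τ`, then, its increments being at most `ϱ ≤ θ`, there would be a full window of `ℵ + 1`
steps before `τ`, on which `lam` is at least `θ ℵ - j ϱ` at distance `j` from `τ`. Summing the drift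
over this window makes `lam τ ^ 2` at most the square at the start of the window, which contradicts
the choice of `τ` (`multiplier_le`).
-/

open Finset

/-- Three-point inequality for a proximal step over the simplex: a minimizer `p` of a linear
functional plus `c * ‖· - p₀‖ ^ 2` beats every competitor `q` by at least `c * ‖q - p‖ ^ 2`. -/
theorem prox_three_point {R : Type*} [Fintype R] (f : R → ℝ) (c : ℝ) (p₀ p q : EuclideanSpace ℝ R)
    (hp : (∀ a : R, 0 ≤ p a) ∧ ∑ a : R, p a = 1)
    (hq : (∀ a : R, 0 ≤ q a) ∧ ∑ a : R, q a = 1)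
    (hmin : ∀ r : EuclideanSpace ℝ R, ((∀ a : R, 0 ≤ r a) ∧ ∑ a : R, r a = 1) →
      (∑ a : R, p a * f a) + c * ‖p - p₀‖ ^ 2 ≤ (∑ a : R, r a * f a) + c * ‖r - p₀‖ ^ 2) :
    (∑ a : R, p a * f a) + c * ‖p - p₀‖ ^ 2 + c * ‖q - p‖ ^ 2 ≤
      (∑ a : R, q a * f a) + c * ‖q - p₀‖ ^ 2 := by
  have hexp : ∀ s : ℝ, ‖(p + s • (q - p)) - p₀‖ ^ 2 =
      ‖p - p₀‖ ^ 2 + 2 * s * inner ℝ (p - p₀) (q - p) + s ^ 2 * ‖q - p‖ ^ 2 := by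
    intro s
    have h : (p + s • (q - p)) - p₀ = (p - p₀) + s • (q - p) := by abel
    rw [h, norm_add_sq_real, inner_smul_right, norm_smul, mul_pow, Real.norm_eq_abs, sq_abs]
    ring
  have hlin : ∀ s : ℝ, ∑ a : R, (p + s • (q - p)) a * f a =
      (∑ a : R, p a * f a) + s * ((∑ a : R, q a * f a) - ∑ a : R, p a * f a) := by
    intro s
    rw [← Finset.sum_sub_distrib, Finset.mul_sum, ← Finset.sum_add_distrib]
    refine Finset.sum_congr rfl fun a _ => ?_
    simp only [PiLp.add_apply, PiLp.smul_apply, PiLp.sub_apply, smul_eq_mul]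
    ring
  -- Minimality along the segment from `p` to `q`, divided by the step length `s`.
  have hseg : ∀ s : ℝ, 0 < s → s ≤ 1 →
      0 ≤ ((∑ a : R, q a * f a) - (∑ a : R, p a * f a)) + 2 * c * inner ℝ (p - p₀) (q - p) +
        s * (c * ‖q - p‖ ^ 2) := by
    intro s hs hs1
    have h := hmin (p + s • (q - p)) ⟨fun a => by
      have h1 := mul_nonneg (sub_nonneg.2 hs1) (hp.1 a)
      have h2 := mul_nonneg hs.le (hq.1 a)
      simp only [PiLp.add_apply, PiLp.smul_apply, PiLp.sub_apply, smul_eq_mul]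
      linarith, by
      simp only [PiLp.add_apply, PiLp.smul_apply, PiLp.sub_apply, smul_eq_mul]
      rw [Finset.sum_add_distrib, ← Finset.mul_sum, Finset.sum_sub_distrib, hp.2, hq.2]
      ring⟩
    rw [hlin, hexp] at h
    refine nonneg_of_mul_nonneg_right (a := s) ?_ hs
    linarith
  have hlim : 0 ≤ ((∑ a : R, q a * f a) - (∑ a : R, p a * f a)) +
      2 * c * inner ℝ (p - p₀) (q - p) := by
    have ht : Filter.Tendsto (fun s : ℝ => ((∑ a : R, q a * f a) - (∑ a : R, p a * f a)) +
        2 * c * inner ℝ (p - p₀) (q - p) + s * (c * ‖q - p‖ ^ 2)) (nhdsWithin 0 (Set.Ioi 0))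
        (nhds (((∑ a : R, q a * f a) - (∑ a : R, p a * f a)) +
          2 * c * inner ℝ (p - p₀) (q - p) + 0 * (c * ‖q - p‖ ^ 2))) :=
      (Continuous.tendsto (by fun_prop) 0).mono_left nhdsWithin_le_nhds
    rw [zero_mul, add_zero] at ht
    refine ge_of_tendsto ht ?_
    filter_upwards [Ioc_mem_nhdsGT (zero_lt_one (α := ℝ))] with s hs
    exact hseg s hs.1 hs.2
  have h1 := hexp 1
  rw [one_smul, add_sub_cancel] at h1
  rw [h1]
  linarith

theorem simplex_dist_sq_le {R : Type*} [Fintype R] (p q : EuclideanSpace ℝ R)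
    (hp : (∀ a : R, 0 ≤ p a) ∧ ∑ a : R, p a = 1)
    (hq : (∀ a : R, 0 ≤ q a) ∧ ∑ a : R, q a = 1) : ‖q - p‖ ^ 2 ≤ 2 := by
  rw [EuclideanSpace.real_norm_sq_eq]
  have hle : ∀ r : EuclideanSpace ℝ R, ((∀ a : R, 0 ≤ r a) ∧ ∑ a : R, r a = 1) →
      ∀ a, r a ≤ 1 := fun r hr a => by
    rw [← hr.2]
    exact Finset.single_le_sum (fun i _ => hr.1 i) (Finset.mem_univ a)
  calc ∑ a : R, (q - p) a ^ 2 ≤ ∑ a : R, (q a + p a) := by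
        refine Finset.sum_le_sum fun a _ => ?_
        simp only [PiLp.sub_apply]
        nlinarith [hp.1 a, hq.1 a, hle p hp a, hle q hq a, mul_nonneg (hp.1 a) (hq.1 a)]
    _ = 2 := by rw [Finset.sum_add_distrib, hp.2, hq.2]; norm_num

theorem simplex_expectation_mem {R : Type*} [Fintype R] (p : EuclideanSpace ℝ R)
    (hp : (∀ a : R, 0 ≤ p a) ∧ ∑ a : R, p a = 1) (f : R → ℝ) (M : ℝ)
    (hf : ∀ a, 0 ≤ f a ∧ f a ≤ M) : 0 ≤ ∑ a : R, p a * f a ∧ ∑ a : R, p a * f a ≤ M := by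
  refine ⟨Finset.sum_nonneg fun a _ => mul_nonneg (hp.1 a) (hf a).1, ?_⟩
  calc ∑ a : R, p a * f a ≤ ∑ a : R, p a * M :=
        Finset.sum_le_sum fun a _ => mul_le_mul_of_nonneg_left (hf a).2 (hp.1 a)
    _ = M := by rw [← Finset.sum_mul, hp.2, one_mul]

/-- The drift argument. A nonnegative sequence started at `0` at index `1`, with increments at most
`ρ`, whose square has drift at most `A - η * lam` up to a telescoping term, stays below any level
`B ≥ ρ N` that satisfies the window condition `hB` for windows of `N + 1` steps. -/
theorem multiplier_le (lam D : ℕ → ℝ) (ρ μ η A c B : ℝ) (N : ℕ)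
    (hμ : 0 < μ) (hη : 0 < η) (hc : 0 ≤ c) (hD0 : ∀ k, 0 ≤ D k) (hD2 : ∀ k, D k ≤ 2)
    (h1 : lam 1 = 0) (hnn : ∀ k, 0 ≤ lam (k + 1)) (hρ : 0 ≤ ρ)
    (hinc : ∀ k, lam (k + 2) ≤ lam (k + 1) + ρ)
    (hdrift : ∀ k, lam (k + 2) ^ 2 / 2 - lam (k + 1) ^ 2 / 2 ≤
      μ * (A - η * lam (k + 1) + c * (D k - D (k + 1))))
    (hBρ : ρ * N ≤ B)
    (hB : A + 2 * c / (N + 1) ≤ η * (B - ρ * (N + 2) / 2)) (n : ℕ) : lam (n + 1) ≤ B := by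
  have hgrow : ∀ m : ℕ, lam (m + 1) ≤ m * ρ := by
    intro m
    induction m with
    | zero => simp [h1]
    | succ m ih =>
      have := hinc m
      push_cast
      linarith
  have hwin : ∀ k m : ℕ, lam (k + m + 1) ^ 2 / 2 - lam (k + 1) ^ 2 / 2 ≤
      μ * (m * A - η * (∑ i ∈ Finset.range m, lam (k + i + 1)) + c * (D k - D (k + m))) := by
    intro k m
    induction m with
    | zero => simp
    | succ m ih =>
      have := hdrift (k + m)
      rw [Finset.sum_range_succ]
      push_cast
      simp only [← add_assoc] at this ⊢
      linarith
  have hsum : ∀ k m : ℕ, m * lam (k + m + 1) - ρ * (m * (m + 1)) / 2 ≤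
      ∑ i ∈ Finset.range m, lam (k + i + 1) := by
    intro k m
    induction m with
    | zero => simp
    | succ m ih =>
      have := mul_le_mul_of_nonneg_left (hinc (k + m)) (by positivity : (0 : ℝ) ≤ m + 1)
      rw [Finset.sum_range_succ]
      push_cast
      simp only [← add_assoc] at this ⊢
      linarith
  induction n using Nat.strong_induction_on with
  | _ n ih =>
    by_contra! hlt
    -- The growth bound leaves room for a whole window before the first index above `B`.
    have hn : N + 1 ≤ n := by
      by_contra! hnN
      have h2 : (n : ℝ) ≤ N := by exact_mod_cast Nat.lt_succ_iff.1 hnN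
      have h3 := mul_le_mul_of_nonneg_right h2 hρ
      linarith [hgrow n]
    obtain ⟨k, rfl⟩ := Nat.exists_eq_add_of_le' hn
    have hk := ih k (by omega)
    have hw := hwin k (N + 1)
    have hs := hsum k (N + 1)
    have hpos : (0 : ℝ) < N + 1 := by positivity
    have hsq : lam (k + 1) ^ 2 < lam (k + (N + 1) + 1) ^ 2 :=
      pow_lt_pow_left₀ (hk.trans_lt hlt) (hnn k) two_ne_zero
    push_cast at hw hs
    have hcD : c * (D k - D (k + (N + 1))) ≤ c * 2 :=
      mul_le_mul_of_nonneg_left (by linarith [hD0 (k + (N + 1)), hD2 k]) hc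
    have hX := pos_of_mul_pos_right (lt_of_lt_of_le (by linarith) hw) hμ.le
    have hs2 := mul_le_mul_of_nonneg_left hs hη.le
    have hB2 := mul_le_mul_of_nonneg_left hB hpos.le
    have hcN : ((N : ℝ) + 1) * (A + 2 * c / (N + 1)) = (N + 1) * A + 2 * c := by
      field_simp
    rw [hcN] at hB2
    have hl := mul_lt_mul_of_pos_left hlt (mul_pos hη hpos)
    linarith

theorem stmt4
    {R : Type*} [Fintype R] [Nonempty R]
    (CR : R → ℝ) (CV CT : R → R → ℝ) (Θ v α μ : ℝ)
    (hΘ : 0 < Θ) (hv : 0 < v) (hα : 0 < α) (hμ : 0 < μ)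
    (hCR : ∀ a : R, 0 ≤ CR a ∧ CR a ≤ Θ)
    (hCV : ∀ a c : R, 0 ≤ CV a c ∧ CV a c ≤ Θ)
    (hCT : ∀ a c : R, 0 ≤ CT a c ∧ CT a c ≤ Θ)
    (b : ℕ → R) (P : ℕ → EuclideanSpace ℝ R) (lam : ℕ → ℝ)
    (hP0 : (∀ a : R, 0 ≤ P 0 a) ∧ ∑ a : R, P 0 a = 1)
    (hlam1 : lam 1 = 0)
    (hPmem : ∀ t : ℕ, 1 ≤ t → (∀ a : R, 0 ≤ P t a) ∧ ∑ a : R, P t a = 1)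
    (hPmin : ∀ t : ℕ, 1 ≤ t → ∀ Q : EuclideanSpace ℝ R,
      ((∀ a : R, 0 ≤ Q a) ∧ ∑ a : R, Q a = 1) →
      (∑ a : R, P t a * CR a) +
        lam t * ((∑ a : R, P t a * (CV a (b (t-1)) + CT a (b (t-1)))) - v) +
        (1/(2*α)) * ‖P t - P (t-1)‖^2 ≤
      (∑ a : R, Q a * CR a) +
        lam t * ((∑ a : R, Q a * (CV a (b (t-1)) + CT a (b (t-1)))) - v) +
        (1/(2*α)) * ‖Q - P (t-1)‖^2)
    (hlam : ∀ t : ℕ, 1 ≤ t →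
      lam (t+1) = max 0 (lam t + μ * ((∑ a : R, P t a * (CV a (b (t-1)) + CT a (b (t-1)))) - v)))
    (Ptilde : EuclideanSpace ℝ R) (η : ℝ) (hη : 0 < η)
    (hPtilde : (∀ a : R, 0 ≤ Ptilde a) ∧ ∑ a : R, Ptilde a = 1)
    (hSlater : ∀ c : R, (∑ a : R, Ptilde a * (CV a c + CT a c)) - v ≤ -η)
    (hvΘ : v ≤ 2*Θ)
    (T : ℕ) (hT : 1 ≤ T) (ℵ : ℕ) (hℵ : 1 ≤ ℵ) :
    ∑ t ∈ Finset.Icc 1 T,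
        ((∑ a : R, P t a * (CV a (b (t-1)) + CT a (b (t-1)))) - v) ≤
      (max (μ*(2*Θ - v)) ((1/(η*(ℵ:ℝ))) * ((1/2)*μ*(4*Θ^2+v^2) + (α/2)*(Fintype.card R : ℝ)*Θ^2 + 1/(α*((ℵ:ℝ)+1)) + Θ) + (μ*(2*Θ - v))*((ℵ:ℝ)+2)/(2*(ℵ:ℝ)))) * (ℵ:ℝ) / μ := by
  have hρ : 0 ≤ μ * (2 * Θ - v) := mul_nonneg hμ.le (by linarith)
  have hN : (0 : ℝ) < ℵ := by exact_mod_cast hℵ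
  have hmem : ∀ t, (∀ a : R, 0 ≤ P t a) ∧ ∑ a : R, P t a = 1 := fun t => by
    rcases Nat.eq_zero_or_pos t with rfl | h
    · exact hP0
    · exact hPmem t h
  have hC : ∀ k : ℕ, 0 ≤ ∑ a : R, P (k + 1) a * (CV a (b k) + CT a (b k)) ∧
      ∑ a : R, P (k + 1) a * (CV a (b k) + CT a (b k)) ≤ 2 * Θ := fun k =>
    simplex_expectation_mem _ (hmem _) (fun a => CV a (b k) + CT a (b k)) _ fun a =>
      ⟨add_nonneg (hCV a _).1 (hCT a _).1, by linarith [(hCV a (b k)).2, (hCT a (b k)).2]⟩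
  have hrec : ∀ k : ℕ, lam (k + 2) = max 0 (lam (k + 1) +
      μ * ((∑ a : R, P (k + 1) a * (CV a (b k) + CT a (b k))) - v)) := fun k => by
    simpa using hlam (k + 1) (by omega)
  have hnn : ∀ k, 0 ≤ lam (k + 1) := fun k => by
    cases k with
    | zero => exact hlam1.ge
    | succ k => rw [hrec k]; exact le_max_left _ _
  have hinc : ∀ k, lam (k + 2) ≤ lam (k + 1) + μ * (2 * Θ - v) := fun k => by
    rw [hrec k]
    refine max_le (add_nonneg (hnn k) hρ) ?_
    have := mul_le_mul_of_nonneg_left (hC k).2 hμ.le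
    linarith
  have hdrift : ∀ k, lam (k + 2) ^ 2 / 2 - lam (k + 1) ^ 2 / 2 ≤
      μ * (((1/2) * μ * (4*Θ^2+v^2) + (α/2)*(Fintype.card R : ℝ)*Θ^2 + Θ) - η * lam (k + 1) +
        1 / (2 * α) * (‖Ptilde - P k‖ ^ 2 - ‖Ptilde - P (k + 1)‖ ^ 2)) := by
    intro k
    have hsplit : ∀ r : EuclideanSpace ℝ R,
        ∑ a : R, r a * (CR a + lam (k + 1) * (CV a (b k) + CT a (b k))) =
          (∑ a : R, r a * CR a) + lam (k + 1) * ∑ a : R, r a * (CV a (b k) + CT a (b k)) := by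
      intro r
      rw [Finset.mul_sum, ← Finset.sum_add_distrib]
      exact Finset.sum_congr rfl fun a _ => by ring
    have h3 := prox_three_point (fun a => CR a + lam (k + 1) * (CV a (b k) + CT a (b k)))
      (1 / (2 * α)) (P k) (P (k + 1)) Ptilde (hmem _) hPtilde (fun r hr => by
        have h := hPmin (k + 1) (by omega) r hr
        simp only [Nat.add_sub_cancel] at h
        rw [hsplit, hsplit]
        linarith)
    rw [hsplit, hsplit] at h3
    have hS := mul_le_mul_of_nonneg_left (hSlater (b k)) (hnn k)
    have hR0 := (simplex_expectation_mem _ (hmem (k + 1)) CR Θ hCR).1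
    have hR1 := (simplex_expectation_mem _ hPtilde CR Θ hCR).2
    have hq : 0 ≤ 1 / (2 * α) * ‖P (k + 1) - P k‖ ^ 2 := by positivity
    have hcard : 0 ≤ (α/2)*(Fintype.card R : ℝ)*Θ^2 := by positivity
    obtain ⟨hE0, hE1⟩ := hC k
    rw [hrec k]
    set E := ∑ a : R, P (k + 1) a * (CV a (b k) + CT a (b k)) with hE
    have hsq : max 0 (lam (k + 1) + μ * (E - v)) ^ 2 ≤ (lam (k + 1) + μ * (E - v)) ^ 2 := by
      rcases le_total 0 (lam (k + 1) + μ * (E - v)) with h | h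
      · rw [max_eq_right h]
      · rw [max_eq_left h, zero_pow two_ne_zero]; positivity
    have hg : (E - v) ^ 2 ≤ 4 * Θ ^ 2 + v ^ 2 := by
      nlinarith [mul_nonneg hE0 hv.le]
    have hg2 := mul_le_mul_of_nonneg_left hg (by positivity : 0 ≤ (1 / 2) * μ)
    have hlg : lam (k + 1) * (E - v) + (1 / 2) * μ * (E - v) ^ 2 ≤
        ((1/2) * μ * (4*Θ^2+v^2) + (α/2)*(Fintype.card R : ℝ)*Θ^2 + Θ) - η * lam (k + 1) +
        1 / (2 * α) * (‖Ptilde - P k‖ ^ 2 - ‖Ptilde - P (k + 1)‖ ^ 2) := by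
      linarith
    have := mul_le_mul_of_nonneg_left hlg hμ.le
    linarith
  have hbound := multiplier_le lam (fun k => ‖Ptilde - P k‖ ^ 2) (μ * (2 * Θ - v)) μ η
    ((1/2) * μ * (4*Θ^2+v^2) + (α/2)*(Fintype.card R : ℝ)*Θ^2 + Θ) (1 / (2 * α))
    ((max (μ*(2*Θ - v)) ((1/(η*(ℵ:ℝ))) * ((1/2)*μ*(4*Θ^2+v^2) + (α/2)*(Fintype.card R : ℝ)*Θ^2 + 1/(α*((ℵ:ℝ)+1)) + Θ) + (μ*(2*Θ - v))*((ℵ:ℝ)+2)/(2*(ℵ:ℝ)))) * (ℵ:ℝ))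
    ℵ hμ hη (by positivity) (fun k => sq_nonneg _)
    (fun k => simplex_dist_sq_le _ _ (hmem k) hPtilde) hlam1 hnn hρ hinc hdrift
    (mul_le_mul_of_nonneg_right (le_max_left _ _) hN.le) (by
      have h := mul_le_mul_of_nonneg_left (mul_le_mul_of_nonneg_right
        (le_max_right (μ*(2*Θ - v)) ((1/(η*(ℵ:ℝ))) * ((1/2)*μ*(4*Θ^2+v^2) + (α/2)*(Fintype.card R : ℝ)*Θ^2 + 1/(α*((ℵ:ℝ)+1)) + Θ) + (μ*(2*Θ - v))*((ℵ:ℝ)+2)/(2*(ℵ:ℝ)))) hN.le) hη.le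
      have hχ : ∀ K : ℝ, η * ((1/(η*(ℵ:ℝ)) * K + (μ*(2*Θ - v))*((ℵ:ℝ)+2)/(2*(ℵ:ℝ))) * ℵ) =
          K + η * (μ*(2*Θ - v)*((ℵ:ℝ)+2)/2) := fun K => by
        field_simp
      rw [hχ] at h
      have hc : 2 * (1 / (2 * α)) / ((ℵ : ℝ) + 1) = 1/(α*((ℵ:ℝ)+1)) := by
        field_simp
      rw [hc]
      linarith)
  rw [le_div_iff₀ hμ]
  refine le_trans ?_ (hbound T)
  clear hT hbound
  induction T with
  | zero => simp [hlam1]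
  | succ T ih =>
    rw [Finset.sum_Icc_succ_top (by omega), add_mul, Nat.add_sub_cancel, hrec T]
    refine le_trans ?_ (le_max_right _ _)
    linarith
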